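/- Let (V, J_n, L_n) be a Sugawara system and α ∈ ℝ. Then there exists a unitary representation ρ of 𝔎 on V with ρ(k_n) = K^{(α,2)}_n for all n ∈ ℤ ∖ {0} and ρ(C) = 2(1 + 12α²)·id; that is, the operators K^{(α,2)}_n satisfy the commutation relations [K^{(α,2)}_r, K^{(α,2)}_m] = r K^{(α,2)}_r − m K^{(α,2)}_m − (r − m) K^{(α,2)}_{r+m} + (2(1+12α²)/12)(r³ − r) δ_{r+m,0} id and the unitarity relation ⟨K^{(α,2)}_n u, v⟩ = ⟨u, K^{(α,2)}_{−n} v⟩. -/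

import Mathlib

/-!
Write `g_a` for the Laurent polynomial `(a / 2) z^a - (z^a - 1) (z + 1) / (2 (z - 1))` in a current
`J` (`J_k` standing for `z^k`). The operators `L_0 - L_a + 2 i α g_a` represent `𝔎` with central
charge `1 + 12 α²`, and `K^{(α,2)}` is the pullback of this representation along the double
covering `z ↦ z²` of the circle, which doubles the central charge.

The terms linear in `J` match because `a ↦ g_a` is a 1-cocycle: it is half the divergence of the
vector field `(z^a - 1) z d/dz` minus the product of that field with a fixed function. The
Heisenberg commutators are `[g_p, g_a] = δ_{p+a,0} (p - p³) / 4`, a multiple of the Virasoro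
cocycle, and so only shift the central charge. Both identities are checked on mixed second
differences, since the increment `g_{a+1} - g_a = (a z^{a+1} - (a + 1) z^a) / 2` has just two
terms. The symmetry `g_a(1 / z) = -g_{-a}(z)` makes `i g_a` adjoint to `i g_{-a}`.
-/

local notation "⟪" x ", " y "⟫" => @inner ℂ _ _ x y

/-- A unitary representation of the Lie algebra `𝔎` (the subalgebra of the
Virasoro algebra spanned by `{k_n = l_0 - l_n : n ∈ ℤ ∖ {0}} ∪ {C}`) on a
complex inner product space `V`, described through the images
`K n` of the basis elements `k n` (with `K 0 = 0`, since `k_0 = 0`) and the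
image `Cop` of `C`.  The fields record precisely the bracket relations
`[k_r, k_m] = r k_r - m k_m - (r-m) k_{r+m} + (C/12)(r³-r) δ_{r+m,0}`,
`[k_r, C] = 0` of `𝔎`, and unitarity with respect to the involution `θ`
determined by `θ(k_n) = k_{-n}`, `θ(C) = C`. -/
structure KRep (V : Type*) [NormedAddCommGroup V] [InnerProductSpace ℂ V] where
  K : ℤ → Module.End ℂ V
  Cop : Module.End ℂ V
  K_zero : K 0 = 0
  comm : ∀ r m : ℤ, ⁅K r, K m⁆ =
    (r : ℂ) • K r - (m : ℂ) • K m - ((r - m : ℤ) : ℂ) • K (r + m) +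
      (if r + m = 0 then (((r ^ 3 - r : ℤ) : ℂ) / 12) • Cop else 0)
  commC : ∀ r : ℤ, ⁅K r, Cop⁆ = 0
  unitary : ∀ (n : ℤ) (u v : V), ⟪K n u, v⟫ = ⟪u, K (-n) v⟫
  unitaryC : ∀ u v : V, ⟪Cop u, v⟫ = ⟪u, Cop v⟫
/-- A Sugawara system on a complex inner product space `V`: a `U(1)` current
`J` together with the associated stress-energy operators `L` (central charge
`1`), satisfying `[J_n, J_m] = n δ_{n+m,0}`, `J_n⁺ = J_{-n}`,
`[L_n, L_m] = (n-m) L_{n+m} + (1/12)(n³-n) δ_{n+m,0}`, `L_n⁺ = L_{-n}`, and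
`[L_n, J_m] = -m J_{n+m}`. -/
structure Sugawara (V : Type*) [NormedAddCommGroup V] [InnerProductSpace ℂ V] where
  J : ℤ → Module.End ℂ V
  L : ℤ → Module.End ℂ V
  commJJ : ∀ n m : ℤ, ⁅J n, J m⁆ =
    (if n + m = 0 then (n : ℂ) • (1 : Module.End ℂ V) else 0)
  unitaryJ : ∀ (n : ℤ) (u v : V), ⟪J n u, v⟫ = ⟪u, J (-n) v⟫
  commLL : ∀ n m : ℤ, ⁅L n, L m⁆ =
    ((n - m : ℤ) : ℂ) • L (n + m) +
      (if n + m = 0 then (((n ^ 3 - n : ℤ) : ℂ) / 12) • (1 : Module.End ℂ V) else 0)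
  unitaryL : ∀ (n : ℤ) (u v : V), ⟪L n u, v⟫ = ⟪u, L (-n) v⟫
  commLJ : ∀ n m : ℤ, ⁅L n, J m⁆ = (-(m : ℂ)) • J (n + m)

variable {V : Type*} [NormedAddCommGroup V] [InnerProductSpace ℂ V]
/-- `K^{(α,2)}_n = (1/2)(L_0 - L_{2n}) + i n α (J_{2n} + (1/(2|n|))(J_0 + J_{2n}
- 2 Σ_{k=min(0,2n)}^{max(0,2n)} J_k)) + ((1 + 12α²)/16)·id`. -/
noncomputable def Kalpha2 (S : Sugawara V) (α : ℝ) (n : ℤ) : Module.End ℂ V :=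
  ((1 : ℂ) / 2) • (S.L 0 - S.L (2 * n)) +
    (Complex.I * (n : ℂ) * (α : ℂ)) •
      (S.J (2 * n) + ((2 * |n| : ℤ) : ℂ)⁻¹ •
        (S.J 0 + S.J (2 * n) -
          (2 : ℂ) • ∑ k ∈ Finset.Icc (min 0 (2 * n)) (max 0 (2 * n)), S.J k)) +
    (((1 + 12 * α ^ 2 : ℝ) : ℂ) / 16) • (1 : Module.End ℂ V)

section IntegerDifferences

variable {M : Type*} [AddCommGroup M]

theorem eq_of_succ_sub_eq {F G : ℤ → M} (h_zero : F 0 = G 0)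
    (h_succ : ∀ a, F (a + 1) - F a = G (a + 1) - G a) (a : ℤ) : F a = G a := by
  have h_periodic : Function.Periodic (F - G) 1 := fun a => by
    rw [Pi.sub_apply, Pi.sub_apply, sub_eq_sub_iff_sub_eq_sub]
    exact h_succ a
  have h_const := h_periodic.int_mul_eq a
  rwa [mul_one, Pi.sub_apply, Pi.sub_apply, h_zero, sub_self, sub_eq_zero] at h_const

theorem eq_of_mixed_difference_eq {F G : ℤ → ℤ → M} (h_left : ∀ a, F 0 a = G 0 a)
    (h_right : ∀ p, F p 0 = G p 0)
    (h_mixed : ∀ p a, F (p + 1) (a + 1) - F p (a + 1) - (F (p + 1) a - F p a) =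
      G (p + 1) (a + 1) - G p (a + 1) - (G (p + 1) a - G p a)) (p a : ℤ) : F p a = G p a :=
  eq_of_succ_sub_eq (F := (F · a)) (G := (G · a)) (h_left a) (fun p =>
    eq_of_succ_sub_eq (F := F (p + 1) - F p) (G := G (p + 1) - G p)
      (by simp only [Pi.sub_apply, h_right]) (h_mixed p) a) p

end IntegerDifferences

section CocycleCurrent

variable {𝕜 𝔤 M : Type*} [Field 𝕜]

/-- The `a`-th mode `g_a` of the current that deforms `L_0 - L_a`. Under `J_k ↦ z^k` it is the
Laurent polynomial `(a / 2) z^a - (z^a - 1) (z + 1) / (2 (z - 1))`; the sum over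
`Icc (min 0 a) (max 0 a)` expands the quotient uniformly in the sign of `a`. -/
noncomputable def cocycleCurrent (𝕜 : Type*) [Field 𝕜] [AddCommGroup M] [Module 𝕜 M]
    (J : ℤ → M) (a : ℤ) : M :=
  ((a : 𝕜) / 2) • J a + ((a.sign : 𝕜) / 2) •
    (J 0 + J a - (2 : 𝕜) • ∑ k ∈ Finset.Icc (min 0 a) (max 0 a), J k)

section Module

variable [AddCommGroup M] [Module 𝕜 M] (J : ℤ → M)

@[simp]
theorem cocycleCurrent_zero : cocycleCurrent 𝕜 J 0 = 0 := by
  simp [cocycleCurrent]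

theorem cocycleCurrent_of_nonneg [CharZero 𝕜] {a : ℤ} (ha : 0 ≤ a) :
    cocycleCurrent 𝕜 J a = ((a : 𝕜) / 2) • J a + (1 / 2 : 𝕜) • (J 0 + J a) -
      ∑ k ∈ Finset.Icc 0 a, J k := by
  obtain rfl | h_pos := ha.eq_or_lt
  · simp only [cocycleCurrent_zero, Finset.Icc_self, Finset.sum_singleton]
    module
  · simp only [cocycleCurrent, Int.sign_eq_one_of_pos h_pos, min_eq_left ha, max_eq_right ha]
    module

theorem cocycleCurrent_of_nonpos [CharZero 𝕜] {a : ℤ} (ha : a ≤ 0) :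
    cocycleCurrent 𝕜 J a = ((a : 𝕜) / 2) • J a - (1 / 2 : 𝕜) • (J 0 + J a) +
      ∑ k ∈ Finset.Icc a 0, J k := by
  obtain rfl | h_neg := ha.eq_or_lt
  · simp only [cocycleCurrent_zero, Finset.Icc_self, Finset.sum_singleton]
    module
  · simp only [cocycleCurrent, Int.sign_eq_neg_one_of_neg h_neg, min_eq_right ha, max_eq_left ha]
    module

theorem cocycleCurrent_succ [CharZero 𝕜] (a : ℤ) :
    cocycleCurrent 𝕜 J (a + 1) = cocycleCurrent 𝕜 J a +
      ((a : 𝕜) / 2) • J (a + 1) - (((a + 1 : ℤ) : 𝕜) / 2) • J a := by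
  obtain h | h := le_or_gt 0 a
  · rw [cocycleCurrent_of_nonneg J h, cocycleCurrent_of_nonneg J (by lia : 0 ≤ a + 1),
      ← Finset.insert_Icc_right_eq_Icc_add_one (by lia), Finset.sum_insert (by simp)]
    push_cast
    module
  · rw [cocycleCurrent_of_nonpos J h.le, cocycleCurrent_of_nonpos J (by lia : a + 1 ≤ 0),
      ← Finset.insert_Icc_add_one_left_eq_Icc h.le, Finset.sum_insert (by simp)]
    push_cast
    module

end Module

variable [CharZero 𝕜] [LieRing 𝔤] [LieAlgebra 𝕜 𝔤]

theorem lie_cocycleCurrent_sub_lie_cocycleCurrent [AddCommGroup M] [Module 𝕜 M]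
    [LieRingModule 𝔤 M] [LieModule 𝕜 𝔤 M] {L : ℤ → 𝔤} {J : ℤ → M}
    (hLJ : ∀ n m, ⁅L n, J m⁆ = (-(m : 𝕜)) • J (n + m)) (p a : ℤ) :
    ⁅L 0 - L p, cocycleCurrent 𝕜 J a⁆ - ⁅L 0 - L a, cocycleCurrent 𝕜 J p⁆ =
      (p : 𝕜) • cocycleCurrent 𝕜 J p - (a : 𝕜) • cocycleCurrent 𝕜 J a -
        ((p : 𝕜) - a) • cocycleCurrent 𝕜 J (p + a) := by
  refine eq_of_mixed_difference_eq
    (F := fun p a => ⁅L 0 - L p, cocycleCurrent 𝕜 J a⁆ - ⁅L 0 - L a, cocycleCurrent 𝕜 J p⁆)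
    (G := fun p a => (p : 𝕜) • cocycleCurrent 𝕜 J p - (a : 𝕜) • cocycleCurrent 𝕜 J a -
      ((p : 𝕜) - a) • cocycleCurrent 𝕜 J (p + a)) (by simp) (by simp) (fun p a => ?_) p a
  simp only [cocycleCurrent_succ, lie_add, lie_sub, sub_lie, lie_smul, hLJ, zero_add,
    ← add_assoc, add_right_comm _ 1 a, add_right_comm _ 1 p, add_comm a p]
  push_cast
  module

theorem lie_cocycleCurrent_cocycleCurrent {J : ℤ → 𝔤} {c : 𝔤}
    (hJJ : ∀ n m, ⁅J n, J m⁆ = if n + m = 0 then (n : 𝕜) • c else 0) (p a : ℤ) :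
    ⁅cocycleCurrent 𝕜 J p, cocycleCurrent 𝕜 J a⁆ =
      if p + a = 0 then (((p - p ^ 3 : ℤ) : 𝕜) / 4) • c else 0 := by
  refine eq_of_mixed_difference_eq (F := fun p a => ⁅cocycleCurrent 𝕜 J p, cocycleCurrent 𝕜 J a⁆)
    (G := fun p a => if p + a = 0 then (((p - p ^ 3 : ℤ) : 𝕜) / 4) • c else 0)
    (by simp) (fun p => ?_) (fun p a => ?_) p a
  · obtain rfl | hp := eq_or_ne p 0 <;> simp [*]
  simp only [cocycleCurrent_succ, add_lie, sub_lie, lie_add, lie_sub, lie_smul, smul_lie, hJJ]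
  -- The Kronecker deltas at the corners of the unit square live on these three antidiagonals.
  obtain rfl | rfl | rfl | ⟨h₀, h₁, h₂⟩ : a = -p ∨ a = -p - 1 ∨ a = -p - 2 ∨
      (p + a ≠ 0 ∧ p + a + 1 ≠ 0 ∧ p + a + 2 ≠ 0) := by lia
  all_goals
    split_ifs <;> first | lia | skip
    push_cast
    module

theorem inner_cocycleCurrent {𝕜 E : Type*} [RCLike 𝕜] [NormedAddCommGroup E]
    [InnerProductSpace 𝕜 E] {J : ℤ → Module.End 𝕜 E}
    (hJ : ∀ n u v, inner 𝕜 (J n u) v = inner 𝕜 u (J (-n) v)) (a : ℤ) (u v : E) :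
    inner 𝕜 (cocycleCurrent 𝕜 J a u) v = -inner 𝕜 u (cocycleCurrent 𝕜 J (-a) v) := by
  refine eq_of_succ_sub_eq (F := fun a => inner 𝕜 (cocycleCurrent 𝕜 J a u) v)
    (G := fun a => -inner 𝕜 u (cocycleCurrent 𝕜 J (-a) v)) (by simp) (fun a => ?_) a
  have h_succ := cocycleCurrent_succ (𝕜 := 𝕜) J (-(a + 1))
  rw [show -(a + 1) + 1 = -a by ring] at h_succ
  simp only [cocycleCurrent_succ, h_succ, LinearMap.add_apply, LinearMap.sub_apply,
    LinearMap.smul_apply, inner_add_left, inner_add_right, inner_sub_left, inner_sub_right,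
    inner_smul_left, inner_smul_right, hJ, map_div₀, map_ofNat, map_intCast]
  push_cast
  ring

end CocycleCurrent

section TwistedGenerator

variable {𝕜 𝔤 : Type*} [Field 𝕜] [LieRing 𝔤] [LieAlgebra 𝕜 𝔤]

theorem lie_sub_sub_of_virasoro {L : ℤ → 𝔤} {c : 𝔤}
    (hLL : ∀ n m, ⁅L n, L m⁆ = ((n - m : ℤ) : 𝕜) • L (n + m) +
      if n + m = 0 then (((n ^ 3 - n : ℤ) : 𝕜) / 12) • c else 0) (p a : ℤ) :
    ⁅L 0 - L p, L 0 - L a⁆ =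
      (p : 𝕜) • (L 0 - L p) - (a : 𝕜) • (L 0 - L a) - ((p - a : ℤ) : 𝕜) • (L 0 - L (p + a)) +
        if p + a = 0 then (((p ^ 3 - p : ℤ) : 𝕜) / 12) • c else 0 := by
  have h_zero_left (n : ℤ) : ⁅L 0, L n⁆ = (-(n : 𝕜)) • L n := by simp [hLL]
  have h_zero_right (n : ℤ) : ⁅L n, L 0⁆ = (n : 𝕜) • L n := by
    rw [← lie_skew, h_zero_left, neg_smul, neg_neg]
  simp only [lie_sub, sub_lie, lie_self, h_zero_left, h_zero_right, hLL p a]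
  push_cast
  module

/-- The combination `L_0 - L_a + β g_a` of a Virasoro family `L` and a Heisenberg family `J`,
which satisfies the bracket relations of `k_a` with a shifted central charge. -/
noncomputable def twistedGenerator (L J : ℤ → 𝔤) (β : 𝕜) (a : ℤ) : 𝔤 :=
  L 0 - L a + β • cocycleCurrent 𝕜 J a

theorem lie_twistedGenerator [CharZero 𝕜] {L J : ℤ → 𝔤} {c d : 𝔤}
    (hLL : ∀ n m, ⁅L n, L m⁆ = ((n - m : ℤ) : 𝕜) • L (n + m) +
      if n + m = 0 then (((n ^ 3 - n : ℤ) : 𝕜) / 12) • c else 0)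
    (hLJ : ∀ n m, ⁅L n, J m⁆ = (-(m : 𝕜)) • J (n + m))
    (hJJ : ∀ n m, ⁅J n, J m⁆ = if n + m = 0 then (n : 𝕜) • d else 0) (β : 𝕜) (p a : ℤ) :
    ⁅twistedGenerator L J β p, twistedGenerator L J β a⁆ =
      (p : 𝕜) • twistedGenerator L J β p - (a : 𝕜) • twistedGenerator L J β a -
        ((p - a : ℤ) : 𝕜) • twistedGenerator L J β (p + a) +
          if p + a = 0 then (((p ^ 3 - p : ℤ) : 𝕜) / 12) • (c - (3 * β ^ 2) • d) else 0 := by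
  have h_linear := lie_cocycleCurrent_sub_lie_cocycleCurrent hLJ p a
  rw [sub_eq_iff_eq_add] at h_linear
  simp only [twistedGenerator, lie_add, add_lie, lie_smul, smul_lie, h_linear,
    lie_sub_sub_of_virasoro hLL, lie_cocycleCurrent_cocycleCurrent hJJ,
    ← lie_skew (L 0 - L a) (cocycleCurrent 𝕜 J p)]
  split_ifs <;> push_cast <;> module

end TwistedGenerator

section UnitaryRepresentations

attribute [local instance] LieRing.ofAssociativeRing

namespace KRep

theorem lie_Cop_K (P : KRep V) (n : ℤ) : ⁅P.Cop, P.K n⁆ = 0 := by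
  rw [← lie_skew, P.commC, neg_zero]

/-- The pullback of a representation of `𝔎` along the endomorphism of the Virasoro algebra induced
by the `N`-fold covering `z ↦ z ^ N` of the circle,
`l_n ↦ l_{N n} / N + δ_{n,0} (N² - 1) / (24 N) C` and `C ↦ N C`. -/
noncomputable def cover (P : KRep V) (N : ℤ) (hN : N ≠ 0) : KRep V where
  K n := if n = 0 then 0 else
    (1 / N : ℂ) • P.K (N * n) + (((N : ℂ) ^ 2 - 1) / (24 * N)) • P.Cop
  Cop := (N : ℂ) • P.Cop
  K_zero := if_pos rfl
  comm r m := by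
    have hN' : (N : ℂ) ≠ 0 := Int.cast_ne_zero.mpr hN
    obtain rfl | hr := eq_or_ne r 0
    · obtain rfl | hm := eq_or_ne m 0
      · simp
      · simp [hm, -smul_add]
    obtain rfl | hm := eq_or_ne m 0
    · simp [hr]
    simp only [if_neg hr, if_neg hm, lie_add, add_lie, lie_smul, smul_lie, P.comm, P.commC,
      P.lie_Cop_K, lie_self, smul_zero, add_zero, ← mul_add, mul_eq_zero, hN, false_or]
    split_ifs with h
    · obtain rfl := eq_neg_of_add_eq_zero_right h
      simp only [add_neg_cancel, mul_zero, P.K_zero]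
      push_cast
      match_scalars <;> field
    · push_cast
      match_scalars <;> field
  commC r := by
    split_ifs <;> simp [P.commC]
  unitary n u v := by
    obtain rfl | hn := eq_or_ne n 0
    · simp
    · simp only [if_neg hn, if_neg (neg_ne_zero.mpr hn), LinearMap.add_apply,
        LinearMap.smul_apply, inner_add_left, inner_add_right, inner_smul_left, inner_smul_right,
        P.unitary, P.unitaryC, mul_neg, map_div₀, map_mul, map_sub, map_pow, map_one, map_ofNat,
        map_intCast]
  unitaryC u v := by
    simp only [LinearMap.smul_apply, inner_smul_left, inner_smul_right, P.unitaryC, map_intCast]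

end KRep

namespace Sugawara

/-- The unitary representation `k_a ↦ L_0 - L_a + i γ g_a` of `𝔎` with central charge
`1 + 3 γ²`. -/
noncomputable def toKRep (S : Sugawara V) (γ : ℝ) : KRep V where
  K := twistedGenerator S.L S.J (Complex.I * γ)
  Cop := ((1 + 3 * γ ^ 2 : ℝ) : ℂ) • 1
  K_zero := by simp [twistedGenerator]
  comm p a := by
    have h_charge : (1 : Module.End ℂ V) - (3 * (Complex.I * γ) ^ 2) • 1 =
        ((1 + 3 * γ ^ 2 : ℝ) : ℂ) • 1 := by
      rw [mul_pow, Complex.I_sq]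
      push_cast
      module
    rw [← h_charge]
    exact lie_twistedGenerator S.commLL S.commLJ S.commJJ (Complex.I * γ) p a
  commC a := by simp [Ring.lie_def]
  unitary a u v := by
    simp only [twistedGenerator, LinearMap.add_apply, LinearMap.sub_apply, LinearMap.smul_apply,
      inner_add_left, inner_add_right, inner_sub_left, inner_sub_right, inner_smul_left,
      inner_smul_right, S.unitaryL, inner_cocycleCurrent S.unitaryJ, neg_zero, map_mul,
      Complex.conj_I, Complex.conj_ofReal]
    ring
  unitaryC u v := by
    simp only [LinearMap.smul_apply, Module.End.one_apply, inner_smul_left, inner_smul_right,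
      Complex.conj_ofReal]

theorem cover_toKRep_K (S : Sugawara V) (α : ℝ) {n : ℤ} (hn : n ≠ 0) :
    ((S.toKRep (2 * α)).cover 2 two_ne_zero).K n = Kalpha2 S α n := by
  have h_coeff : (n : ℂ) * ((2 * |n| : ℤ) : ℂ)⁻¹ = ((2 * n).sign : ℂ) / 2 := by
    have h_abs : ((|n| : ℤ) : ℂ) ≠ 0 := Int.cast_ne_zero.mpr (abs_ne_zero.mpr hn)
    rw [Int.sign_mul, Int.sign_eq_one_of_pos two_pos, one_mul]
    push_cast
    field_simp
    rw [mul_comm]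
    exact_mod_cast (Int.sign_mul_abs n).symm
  simp only [KRep.cover, toKRep, twistedGenerator, Kalpha2, cocycleCurrent, if_neg hn, ← h_coeff]
  push_cast
  module

theorem cover_toKRep_Cop (S : Sugawara V) (α : ℝ) :
    ((S.toKRep (2 * α)).cover 2 two_ne_zero).Cop =
      ((2 * (1 + 12 * α ^ 2) : ℝ) : ℂ) • (1 : Module.End ℂ V) := by
  simp only [KRep.cover, toKRep]
  push_cast
  module

end Sugawara

end UnitaryRepresentations

/-- For any Sugawara system and `α ∈ ℝ`, the assignment `k n ↦ K^{(α,2)}_n`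
(`n ∈ ℤ ∖ {0}`), `C ↦ 2(1 + 12α²)·id` gives a unitary representation of `𝔎`:
the operators `K^{(α,2)}_n` satisfy the bracket relations of `𝔎` with central
charge `2(1 + 12α²)` and the unitarity relation
`⟪K^{(α,2)}_n u, v⟫ = ⟪u, K^{(α,2)}_{-n} v⟫`. -/
theorem statement11 (S : Sugawara V) (α : ℝ) :
    ∃ P : KRep V, (∀ n : ℤ, n ≠ 0 → P.K n = Kalpha2 S α n) ∧
      P.Cop = ((2 * (1 + 12 * α ^ 2) : ℝ) : ℂ) • (1 : Module.End ℂ V) :=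
  ⟨(S.toKRep (2 * α)).cover 2 two_ne_zero, fun _ hn => S.cover_toKRep_K α hn,
    S.cover_toKRep_Cop α⟩
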